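/- arXiv:2112.11393 — 9 statements merged into one kernel-verified Lean document; each statement's English description precedes it below -/
import Mathlib

section
/- Let F be a finite field, t and n natural numbers with t < n, and α_1,…,α_n distinct nonzero elements of F. For all s, s' ∈ F, every subset I ⊆ {1,…,n} with |I| ≤ t, and every family (y_i)_{i∈I} of elements of F, the number of polynomials f over F of degree at most t with f(0) = s and f(α_i) = y_i for all i ∈ I equals the number of polynomials g over F of degree at most t with g(0) = s' and g(α_i) = y_i for all i ∈ I. (This is the counting formulation of the statement that, for a uniformly random polynomial of degree at most t with prescribed constant term, the joint distribution of its values at any at most t of the points α_1,…,α_n is independent of the constant term.) -/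
open Polynomial

/-- Counting formulation of the privacy of Shamir secret sharing: for any at most `t`
evaluation points among the distinct nonzero `α i` and any prescribed values there, the
number of degree-`≤ t` polynomials with constant term `s` matching those values equals the
number with constant term `s'`. -/
theorem stmt_0 (F : Type*) [Field F] [Fintype F] (t n : ℕ) (htn : t < n)
    (α : Fin n → F) (hα : Function.Injective α) (hα0 : ∀ i, α i ≠ 0)
    (s s' : F) (I : Finset (Fin n)) (hI : I.card ≤ t) (y : Fin n → F) :
    {f : F[X] | f.natDegree ≤ t ∧ f.eval 0 = s ∧ ∀ i ∈ I, f.eval (α i) = y i}.ncard =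
    {g : F[X] | g.natDegree ≤ t ∧ g.eval 0 = s' ∧ ∀ i ∈ I, g.eval (α i) = y i}.ncard := by
  classical
  obtain ⟨p, hpd, hp0, hpI⟩ : ∃ p : F[X], p.natDegree ≤ t ∧ p.eval 0 = s' - s ∧
      ∀ i ∈ I, p.eval (α i) = 0 := by
    set q : F[X] := ∏ i ∈ I, (X - C (α i)) with hq
    have hq0 : q.eval 0 ≠ 0 := by
      rw [hq, eval_prod, Finset.prod_ne_zero_iff]
      intro i _
      simpa using hα0 i
    refine ⟨C ((s' - s) / q.eval 0) * q, ?_, ?_, ?_⟩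
    · refine (natDegree_C_mul_le _ _).trans ?_
      rw [hq, natDegree_finsetProd_X_sub_C_eq_card]
      exact hI
    · rw [eval_mul, eval_C, div_mul_cancel₀ _ hq0]
    · intro i hi
      have hqi : q.eval (α i) = 0 := by
        rw [hq, eval_prod]
        exact Finset.prod_eq_zero hi (by simp)
      rw [eval_mul, hqi, mul_zero]
  rw [← Set.ncard_image_of_injective _ (add_left_injective p)]
  congr 1
  ext g
  simp only [Set.mem_image, Set.mem_ofPred_eq]
  constructor
  · rintro ⟨f, ⟨hd, h0, hf⟩, rfl⟩
    refine ⟨natDegree_add_le_of_degree_le hd hpd, by rw [eval_add, h0, hp0]; ring, ?_⟩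
    intro i hi
    rw [eval_add, hf i hi, hpI i hi, add_zero]
  · rintro ⟨hd, h0, hg⟩
    refine ⟨g - p, ⟨natDegree_sub_le_of_le hd hpd |>.trans (by simp), by rw [eval_sub, h0, hp0]; ring, ?_⟩,
      by simp⟩
    intro i hi
    rw [eval_sub, hg i hi, hpI i hi, sub_zero]
end

section
/- Let F be a field, α_1,…,α_n distinct nonzero elements of F, and ℓ, m natural numbers. Let A, B ⊆ {1,…,n} with |A| ≥ m + 1 and |B| ≥ ℓ + 1. Suppose (f_i)_{i∈A} are polynomials over F of degree at most ℓ and (g_j)_{j∈B} are polynomials over F of degree at most m such that f_i(α_j) = g_j(α_i) for every i ∈ A and every j ∈ B. Then there exists a unique bivariate polynomial F*(x,y) over F of degree at most (ℓ,m) such that F*(x, α_i) = f_i(x) for every i ∈ A and F*(α_j, y) = g_j(y) for every j ∈ B. -/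
open Polynomial

theorem aux_eq {F : Type*} [Field F] {n d : ℕ} {α : Fin n → F} (hα : Function.Injective α)
    (s : Finset (Fin n)) (hs : d + 1 ≤ s.card) (p q : F[X]) (hp : p.natDegree ≤ d)
    (hq : q.natDegree ≤ d) (h : ∀ i ∈ s, p.eval (α i) = q.eval (α i)) : p = q := by
  have key : ∀ r : F[X], r.natDegree ≤ d → r.degree < (s.card : WithBot ℕ) := fun r hr =>
    lt_of_le_of_lt (natDegree_le_iff_degree_le.mp hr) (by exact_mod_cast hs)
  exact eq_of_degrees_lt_of_eval_index_eq s hα.injOn (key p hp) (key q hq) h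

/-- Pair-wise consistency lemma: pairwise consistent row polynomials `f i` (degree ≤ ℓ,
for `i ∈ A` with `|A| ≥ m + 1`) and column polynomials `g j` (degree ≤ m, for `j ∈ B` with
`|B| ≥ ℓ + 1`) lie on a unique bivariate polynomial of degree at most `(ℓ, m)`.
A bivariate polynomial `F(x,y)` is represented as `P : Polynomial (Polynomial F)`, a
polynomial in `y` whose coefficients are polynomials in `x`; then `F(x, α) = P.eval (C α)`
and `F(α, y) = P.map (evalRingHom α)`. -/
theorem stmt_2 (F : Type*) [Field F] (n ℓ m : ℕ)
    (α : Fin n → F) (hα : Function.Injective α) (hα0 : ∀ i, α i ≠ 0)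
    (A B : Finset (Fin n)) (hA : m + 1 ≤ A.card) (hB : ℓ + 1 ≤ B.card)
    (f g : Fin n → F[X])
    (hf : ∀ i ∈ A, (f i).natDegree ≤ ℓ) (hg : ∀ j ∈ B, (g j).natDegree ≤ m)
    (hcons : ∀ i ∈ A, ∀ j ∈ B, (f i).eval (α j) = (g j).eval (α i)) :
    ∃! P : Polynomial (Polynomial F),
      ((∀ k, (P.coeff k).natDegree ≤ ℓ) ∧ P.natDegree ≤ m) ∧
      (∀ i ∈ A, P.eval (Polynomial.C (α i)) = f i) ∧
      (∀ j ∈ B, P.map (evalRingHom (α j)) = g j) := by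
  obtain ⟨A', hA'A, hA'c⟩ := Finset.exists_subset_card_eq hA
  set P : Polynomial (Polynomial F) :=
    ∑ i ∈ A', (Lagrange.basis A' α i).map C * C (f i) with hP
  have hx : ∀ k, (P.coeff k).natDegree ≤ ℓ := by
    intro k
    rw [hP, finset_sum_coeff]
    refine natDegree_sum_le_of_forall_le _ _ fun i hi => ?_
    rw [coeff_mul_C, coeff_map]
    exact (natDegree_C_mul_le _ _).trans (hf i (hA'A hi))
  have hy : P.natDegree ≤ m := by
    rw [hP]
    refine natDegree_sum_le_of_forall_le _ _ fun i hi => ?_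
    refine (natDegree_mul_C_le _ _).trans (natDegree_map_le.trans ?_)
    rw [natDegree_le_iff_degree_le, Lagrange.degree_basis hα.injOn hi, hA'c]
    simp
  have hcol : ∀ j ∈ B, P.map (evalRingHom (α j)) = g j := by
    intro j hj
    have hdeg : (g j).degree < (A'.card : WithBot ℕ) := by
      refine lt_of_le_of_lt (natDegree_le_iff_degree_le.mp (hg j hj)) ?_
      rw [hA'c]
      exact_mod_cast Nat.lt_succ_self m
    rw [Lagrange.eq_interpolate_of_eval_eq (fun i => (g j).eval (α i)) hα.injOn hdeg
      (fun i _ => rfl), Lagrange.interpolate_apply, hP, Polynomial.map_sum]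
    refine Finset.sum_congr rfl fun i hi => ?_
    have hc : (evalRingHom (α j)).comp C = RingHom.id F := by
      ext; simp
    rw [Polynomial.map_mul, Polynomial.map_map, hc, Polynomial.map_id, map_C, mul_comm,
      coe_evalRingHom, hcons i (hA'A hi) j hj]
  refine ⟨P, ⟨⟨hx, hy⟩, ?_, hcol⟩, ?_⟩
  · intro i hi
    refine aux_eq hα B hB _ _ ?_ (hf i hi) fun j hj => ?_
    · rw [eval_eq_sum_range]
      refine natDegree_sum_le_of_forall_le _ _ fun k _ => ?_
      rw [← C_pow]
      exact (natDegree_mul_C_le _ _).trans (hx k)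
    · rw [hcons i hi j hj, ← hcol j hj, eval_map, ← coe_evalRingHom (α j), eval,
        hom_eval₂]
      simp
  · rintro Q ⟨⟨hQx, -⟩, -, hQ⟩
    ext1 k
    refine aux_eq hα B hB _ _ (hQx k) (hx k) fun j hj => ?_
    have := congrArg (fun p => p.coeff k) ((hQ j hj).trans (hcol j hj).symm)
    simpa only [coeff_map, coe_evalRingHom] using this
end

section
/- Let F be a field, α_1,…,α_n distinct nonzero elements of F, t a natural number, and A ⊆ {1,…,n} with |A| ≥ t + 1. Suppose (f_i)_{i∈A} are polynomials over F of degree at most t satisfying f_i(α_j) = f_j(α_i) for all i, j ∈ A. Then there exists a unique bivariate polynomial F*(x,y) over F of degree at most (t,t) such that F*(x, α_i) = f_i(x) and F*(α_i, y) = f_i(y) for every i ∈ A, and moreover this F* is symmetric, i.e., F*(x,y) = F*(y,x). -/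
open Polynomial

/-- Symmetric pairwise-consistency lemma: if the degree-`≤ t` polynomials `f i`, `i ∈ A`
with `|A| ≥ t + 1`, satisfy `f i (α j) = f j (α i)`, then there is a unique bivariate
polynomial of degree at most `(t,t)` having each `f i` as both its `i`-th row and `i`-th
column polynomial, and moreover this polynomial is symmetric.
A bivariate polynomial `F(x,y)` is represented as `P : Polynomial (Polynomial F)`
(polynomial in `y` with coefficients polynomials in `x`): `F(x, α) = P.eval (C α)`,
`F(α, y) = P.map (evalRingHom α)`, and symmetry means the coefficient of `x^a y^b` equals
that of `x^b y^a` for all `a, b`. -/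
theorem stmt_3 (F : Type*) [Field F] (n t : ℕ)
    (α : Fin n → F) (hα : Function.Injective α) (hα0 : ∀ i, α i ≠ 0)
    (A : Finset (Fin n)) (hA : t + 1 ≤ A.card)
    (f : Fin n → F[X]) (hf : ∀ i ∈ A, (f i).natDegree ≤ t)
    (hcons : ∀ i ∈ A, ∀ j ∈ A, (f i).eval (α j) = (f j).eval (α i)) :
    ∃ P : Polynomial (Polynomial F),
      (((∀ k, (P.coeff k).natDegree ≤ t) ∧ P.natDegree ≤ t) ∧
        (∀ i ∈ A, P.eval (Polynomial.C (α i)) = f i) ∧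
        (∀ i ∈ A, P.map (evalRingHom (α i)) = f i) ∧
        (∀ a b, (P.coeff a).coeff b = (P.coeff b).coeff a)) ∧
      ∀ Q : Polynomial (Polynomial F),
        ((∀ k, (Q.coeff k).natDegree ≤ t) ∧ Q.natDegree ≤ t) →
        (∀ i ∈ A, Q.eval (Polynomial.C (α i)) = f i) →
        (∀ i ∈ A, Q.map (evalRingHom (α i)) = f i) →
        Q = P := by
  classical
  obtain ⟨B, hBA, hB⟩ := Finset.exists_subset_card_eq hA
  have hinj : Set.InjOn α (B : Set (Fin n)) := hα.injOn
  have hinterp : ∀ g : F[X], g.natDegree ≤ t →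
      g = ∑ i ∈ B, C (g.eval (α i)) * Lagrange.basis B α i := by
    intro g hg
    have h := Lagrange.eq_interpolate (s := B) (v := α) (f := g) hinj (by
      rw [hB]
      exact lt_of_le_of_lt degree_le_natDegree (by exact_mod_cast Nat.lt_succ_of_le hg))
    rw [Lagrange.interpolate_apply] at h
    exact h
  have hLdeg : ∀ i ∈ B, (Lagrange.basis B α i).natDegree ≤ t := by
    intro i hi
    apply natDegree_le_of_degree_le
    rw [Lagrange.degree_basis hinj hi, hB]
    simp
  have huniv : ∀ g h : F[X], g.natDegree ≤ t → h.natDegree ≤ t →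
      (∀ i ∈ B, g.eval (α i) = h.eval (α i)) → g = h := by
    intro g h hg hh hgh
    rw [hinterp g hg, hinterp h hh]
    exact Finset.sum_congr rfl fun i hi => by rw [hgh i hi]
  have hcoeff : ∀ k, (∑ i ∈ B, C (f i) * (Lagrange.basis B α i).map C).coeff k
      = ∑ i ∈ B, f i * C ((Lagrange.basis B α i).coeff k) := by
    intro k
    rw [finset_sum_coeff]
    exact Finset.sum_congr rfl fun i hi => by rw [coeff_C_mul, coeff_map]
  have hPk : ∀ k, ((∑ i ∈ B, C (f i) * (Lagrange.basis B α i).map C).coeff k).natDegree ≤ t := by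
    intro k
    rw [hcoeff]
    exact natDegree_sum_le_of_forall_le _ _ fun i hi =>
      (natDegree_mul_C_le _ _).trans (hf i (hBA hi))
  have hPd : (∑ i ∈ B, C (f i) * (Lagrange.basis B α i).map C).natDegree ≤ t :=
    natDegree_sum_le_of_forall_le _ _ fun i hi =>
      (natDegree_C_mul_le _ _).trans (natDegree_map_le.trans (hLdeg i hi))
  have hmap : ∀ j ∈ A, (∑ i ∈ B, C (f i) * (Lagrange.basis B α i).map C).map
      (evalRingHom (α j)) = f j := by
    intro j hj
    rw [Polynomial.map_sum]
    conv_rhs => rw [hinterp (f j) (hf j hj)]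
    refine Finset.sum_congr rfl fun i hi => ?_
    rw [Polynomial.map_mul, map_C, Polynomial.map_map, coe_evalRingHom, hcons i (hBA hi) j hj]
    have : (evalRingHom (α j)).comp C = RingHom.id F := by ext; simp
    rw [this, Polynomial.map_id]
  have hevdeg : ∀ (Q : Polynomial (Polynomial F)) (c : F), (∀ k, (Q.coeff k).natDegree ≤ t) →
      (Q.eval (C c)).natDegree ≤ t := by
    intro Q c hQ
    rw [eval_eq_sum_range]
    refine natDegree_sum_le_of_forall_le _ _ fun i hi => ?_
    rw [← C_pow]
    exact (natDegree_mul_C_le _ _).trans (hQ i)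
  have hee : ∀ (Q : Polynomial (Polynomial F)) (c d : F),
      (Q.eval (C c)).eval d = (Q.map (evalRingHom d)).eval c := by
    intro Q c d
    have := eval_map_apply (evalRingHom d) (p := Q) (C c)
    simpa using this.symm
  refine ⟨∑ i ∈ B, C (f i) * (Lagrange.basis B α i).map C, ⟨⟨hPk, hPd⟩, ?_, hmap, ?_⟩, ?_⟩
  · intro j hj
    refine huniv _ _ (hevdeg _ _ hPk) (hf j hj) fun i hi => ?_
    rw [hee, hmap i (hBA hi), hcons i (hBA hi) j hj]
  · have key : ∀ a b, ((∑ i ∈ B, C (f i) * (Lagrange.basis B α i).map C).coeff a).coeff b =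
        ∑ i ∈ B, ∑ j ∈ B, (f i).eval (α j) * (Lagrange.basis B α j).coeff b *
          (Lagrange.basis B α i).coeff a := by
      intro a b
      rw [hcoeff, finset_sum_coeff]
      refine Finset.sum_congr rfl fun i hi => ?_
      rw [coeff_mul_C]
      conv_lhs => rw [hinterp (f i) (hf i (hBA hi))]
      rw [finset_sum_coeff, Finset.sum_mul]
      exact Finset.sum_congr rfl fun j hj => by rw [coeff_C_mul]
    intro a b
    rw [key, key, Finset.sum_comm]
    refine Finset.sum_congr rfl fun i hi => Finset.sum_congr rfl fun j hj => ?_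
    rw [hcons i (hBA hi) j (hBA hj)]
    ring
  · rintro Q ⟨hQk, hQd⟩ - hQm
    ext1 k
    refine huniv _ _ (hQk k) (hPk k) fun i hi => ?_
    have h := congrArg (fun p => p.coeff k) ((hQm i (hBA hi)).trans (hmap i (hBA hi)).symm)
    simpa only [coeff_map, coe_evalRingHom] using h
end

section
/- Let F be a finite field, α_1,…,α_n distinct nonzero elements of F, t < n, and C ⊆ {1,…,n} with |C| ≤ t. Let q_1 and q_2 be polynomials over F of degree at most t with q_1(α_i) = q_2(α_i) for all i ∈ C. Then for every family ((u_i, v_i))_{i∈C} of pairs of polynomials over F, each of degree at most t, the number of bivariate polynomials F(x,y) of degree at most (t,t) satisfying F(0,y) = q_1(y), F(x,α_i) = u_i(x) for all i ∈ C, and F(α_i,y) = v_i(y) for all i ∈ C, equals the number of bivariate polynomials F'(x,y) of degree at most (t,t) satisfying F'(0,y) = q_2(y), F'(x,α_i) = u_i(x) for all i ∈ C, and F'(α_i,y) = v_i(y) for all i ∈ C. (This is the counting formulation of the statement that the joint distribution of the row and column polynomials of the parties in C, when the bivariate polynomial is chosen uniformly at random subject to F(0,y) = q, is the same for q = q_1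 and q = q_2.) -/
open Polynomial

theorem stmt_4_shift (F : Type*) [Field F] (n t : ℕ)
    (α : Fin n → F) (Cs : Finset (Fin n)) (w : F[X]) (hw : w.natDegree ≤ t)
    (hw0 : w.eval 0 = 1) (hwα : ∀ i ∈ Cs, w.eval (α i) = 0)
    (q d : F[X]) (hd : d.natDegree ≤ t) (hdα : ∀ i ∈ Cs, d.eval (α i) = 0)
    (u v : Fin n → F[X]) (P : Polynomial (Polynomial F))
    (h : ((∀ k, (P.coeff k).natDegree ≤ t) ∧ P.natDegree ≤ t) ∧
        P.map (evalRingHom 0) = q ∧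
        (∀ i ∈ Cs, P.eval (Polynomial.C (α i)) = u i) ∧
        (∀ i ∈ Cs, P.map (evalRingHom (α i)) = v i)) :
    ((∀ k, ((P + d.map Polynomial.C * Polynomial.C w).coeff k).natDegree ≤ t) ∧
        (P + d.map Polynomial.C * Polynomial.C w).natDegree ≤ t) ∧
        (P + d.map Polynomial.C * Polynomial.C w).map (evalRingHom 0) = q + d ∧
        (∀ i ∈ Cs, (P + d.map Polynomial.C * Polynomial.C w).eval (Polynomial.C (α i)) = u i) ∧
        (∀ i ∈ Cs, (P + d.map Polynomial.C * Polynomial.C w).map (evalRingHom (α i)) = v i) := by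
  obtain ⟨⟨h1, h2⟩, h3, h4, h5⟩ := h
  have hm : ∀ a : F, (d.map Polynomial.C).map (evalRingHom a) = d := by
    intro a
    rw [Polynomial.map_map]
    have : (evalRingHom a).comp (Polynomial.C : F →+* F[X]) = RingHom.id F := by
      ext x; simp
    rw [this, Polynomial.map_id]
  refine ⟨⟨fun k => ?_, ?_⟩, ?_, fun i hi => ?_, fun i hi => ?_⟩
  · rw [coeff_add, coeff_mul_C, coeff_map]
    exact natDegree_add_le_of_degree_le (h1 k) ((natDegree_C_mul_le _ _).trans hw)
  · exact natDegree_add_le_of_degree_le h2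
      ((natDegree_mul_C_le _ _).trans (natDegree_map_le.trans hd))
  · rw [Polynomial.map_add, Polynomial.map_mul, hm, h3, Polynomial.map_C]
    simp [hw0]
  · rw [eval_add, eval_mul, h4 i hi, eval_map, eval₂_at_apply, hdα i hi]
    simp
  · rw [Polynomial.map_add, Polynomial.map_mul, hm, h5 i hi, Polynomial.map_C]
    simp [hwα i hi]

/-- Counting formulation of the privacy of bivariate-polynomial based VSS: for any set
`Cs` of at most `t` corrupt parties and any prescribed row polynomials `u i` and column
polynomials `v i` for `i ∈ Cs` (each of degree at most `t`), the number of bivariate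
polynomials of degree at most `(t,t)` with `F(0,y) = q₁` and those rows/columns equals the
number with `F(0,y) = q₂`, whenever `q₁, q₂` are degree-`≤ t` polynomials agreeing at the
points `α i`, `i ∈ Cs`.
A bivariate polynomial `F(x,y)` is represented as `P : Polynomial (Polynomial F)`
(polynomial in `y` with coefficients polynomials in `x`): `F(x, α) = P.eval (C α)`,
`F(α, y) = P.map (evalRingHom α)`, and in particular `F(0, y) = P.map (evalRingHom 0)`. -/
theorem stmt_4 (F : Type*) [Field F] [Fintype F] (n t : ℕ) (htn : t < n)
    (α : Fin n → F) (hα : Function.Injective α) (hα0 : ∀ i, α i ≠ 0)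
    (Cs : Finset (Fin n)) (hCs : Cs.card ≤ t)
    (q₁ q₂ : F[X]) (hq₁ : q₁.natDegree ≤ t) (hq₂ : q₂.natDegree ≤ t)
    (hagree : ∀ i ∈ Cs, q₁.eval (α i) = q₂.eval (α i))
    (u v : Fin n → F[X])
    (hu : ∀ i ∈ Cs, (u i).natDegree ≤ t) (hv : ∀ i ∈ Cs, (v i).natDegree ≤ t) :
    {P : Polynomial (Polynomial F) |
        ((∀ k, (P.coeff k).natDegree ≤ t) ∧ P.natDegree ≤ t) ∧
        P.map (evalRingHom 0) = q₁ ∧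
        (∀ i ∈ Cs, P.eval (Polynomial.C (α i)) = u i) ∧
        (∀ i ∈ Cs, P.map (evalRingHom (α i)) = v i)}.ncard =
    {P : Polynomial (Polynomial F) |
        ((∀ k, (P.coeff k).natDegree ≤ t) ∧ P.natDegree ≤ t) ∧
        P.map (evalRingHom 0) = q₂ ∧
        (∀ i ∈ Cs, P.eval (Polynomial.C (α i)) = u i) ∧
        (∀ i ∈ Cs, P.map (evalRingHom (α i)) = v i)}.ncard := by
  obtain ⟨w, hw, hw0, hwα⟩ : ∃ w : F[X], w.natDegree ≤ t ∧ w.eval 0 = 1 ∧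
      ∀ i ∈ Cs, w.eval (α i) = 0 := by
    refine ⟨∏ i ∈ Cs, (1 - Polynomial.C (α i)⁻¹ * X), ?_, ?_, fun i hi => ?_⟩
    · refine (natDegree_prod_le _ _).trans (le_trans ?_ hCs)
      rw [Finset.card_eq_sum_ones]
      refine Finset.sum_le_sum fun i _ => ?_
      refine (natDegree_sub_le _ _).trans ?_
      rw [natDegree_one]
      exact max_le (by simp) ((natDegree_C_mul_le _ _).trans natDegree_X_le)
    · simp [eval_prod]
    · rw [eval_prod]
      exact Finset.prod_eq_zero hi (by simp [hα0 i])
  have hd : (q₂ - q₁).natDegree ≤ t := (natDegree_sub_le _ _).trans (max_le hq₂ hq₁)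
  have hd' : (q₁ - q₂).natDegree ≤ t := (natDegree_sub_le _ _).trans (max_le hq₁ hq₂)
  refine Set.ncard_congr
    (fun P _ => P + (q₂ - q₁).map Polynomial.C * Polynomial.C w) ?_ ?_ ?_
  · intro P hP
    have := stmt_4_shift F n t α Cs w hw hw0 hwα q₁ (q₂ - q₁) hd
      (fun i hi => by simp [hagree i hi]) u v P hP
    rw [add_sub_cancel] at this
    exact this
  · intro P Q _ _ h
    exact add_right_cancel h
  · intro P hP
    have := stmt_4_shift F n t α Cs w hw hw0 hwα q₂ (q₁ - q₂) hd'
      (fun i hi => by simp [hagree i hi]) u v P hP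
    rw [add_sub_cancel] at this
    refine ⟨_, this, ?_⟩
    simp only [Polynomial.map_sub]
    ring
end

section
/- Let F be a field, α_1,…,α_n distinct nonzero elements of F, t < n, and C ⊆ {1,…,n} with |C| ≤ t. Let (u_i)_{i∈C} and (v_i)_{i∈C} be polynomials over F of degree at most t satisfying the pairwise-consistency conditions u_i(α_j) = v_j(α_i) for all i, j ∈ C, and let q be any polynomial over F of degree at most t with q(α_i) = u_i(0) for all i ∈ C. Then there exists a bivariate polynomial F(x,y) over F of degree at most (t,t) such that F(0,y) = q(y), F(x,α_i) = u_i(x) for all i ∈ C, and F(α_i,y) = v_i(y) for all i ∈ C. -/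
open Polynomial

/-- The product `f(x) g(y)` as a bivariate polynomial. -/
noncomputable def tens {F : Type*} [Field F] (f g : F[X]) : Polynomial (Polynomial F) :=
  Polynomial.C f * g.map Polynomial.C

lemma tens_map {F : Type*} [Field F] (f g : F[X]) (a : F) :
    (tens f g).map (evalRingHom a) = Polynomial.C (f.eval a) * g := by
  have h : (evalRingHom a).comp (Polynomial.C) = RingHom.id F := by ext; simp
  rw [tens, Polynomial.map_mul, Polynomial.map_map, h]
  simp

lemma tens_eval {F : Type*} [Field F] (f g : F[X]) (a : F) :
    (tens f g).eval (Polynomial.C a) = f * Polynomial.C (g.eval a) := by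
  rw [tens, eval_mul, eval_C, eval_map, eval₂_at_apply]

lemma tens_coeff {F : Type*} [Field F] (f g : F[X]) (t k : ℕ) (hf : f.natDegree ≤ t) :
    ((tens f g).coeff k).natDegree ≤ t := by
  rw [tens, coeff_C_mul, coeff_map]
  exact (natDegree_mul_C_le _ _).trans hf

lemma tens_deg {F : Type*} [Field F] (f g : F[X]) (t : ℕ) (hg : g.natDegree ≤ t) :
    (tens f g).natDegree ≤ t :=
  (natDegree_C_mul_le _ _).trans (natDegree_map_le.trans hg)

lemma basis_deg {F ι : Type*} [Field F] [DecidableEq ι] (s : Finset ι) (b : ι → F)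
    (hb : Set.InjOn b s) (i : ι) (hi : i ∈ s) (t : ℕ) (hs : s.card ≤ t + 1) :
    (Lagrange.basis s b i).natDegree ≤ t := by
  rw [natDegree_eq_of_degree_eq_some (Lagrange.degree_basis hb hi)]
  omega

lemma basis_sum {F ι : Type*} [Field F] [DecidableEq ι] (s : Finset ι) (b : ι → F)
    (hb : Set.InjOn b s) (j : ι) (hj : j ∈ s) (w : ι → F[X]) :
    ∑ i ∈ s, Polynomial.C ((Lagrange.basis s b i).eval (b j)) * w i = w j := by
  rw [Finset.sum_eq_single_of_mem j hj]
  · rw [Lagrange.eval_basis_self hb hj]; simp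
  · intro i hi hij
    rw [Lagrange.eval_basis_of_ne hij hj]; simp

/-- Extension lemma: pairwise-consistent row polynomials `u i` and column polynomials
`v i` (degree ≤ t) for a set `Cs` of at most `t` indices, together with any degree-`≤ t`
polynomial `q` with `q (α i) = u i (0)`, extend to a bivariate polynomial of degree at
most `(t,t)` with `F(0,y) = q`, rows `u i` and columns `v i`.
A bivariate polynomial `F(x,y)` is represented as `P : Polynomial (Polynomial F)`
(polynomial in `y` with coefficients polynomials in `x`): `F(x, α) = P.eval (C α)`,
`F(α, y) = P.map (evalRingHom α)`, and `F(0, y) = P.map (evalRingHom 0)`. -/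
theorem stmt_5 (F : Type*) [Field F] (n t : ℕ) (htn : t < n)
    (α : Fin n → F) (hα : Function.Injective α) (hα0 : ∀ i, α i ≠ 0)
    (Cs : Finset (Fin n)) (hCs : Cs.card ≤ t)
    (u v : Fin n → F[X])
    (hu : ∀ i ∈ Cs, (u i).natDegree ≤ t) (hv : ∀ i ∈ Cs, (v i).natDegree ≤ t)
    (hcons : ∀ i ∈ Cs, ∀ j ∈ Cs, (u i).eval (α j) = (v j).eval (α i))
    (q : F[X]) (hq : q.natDegree ≤ t) (hqv : ∀ i ∈ Cs, q.eval (α i) = (u i).eval 0) :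
    ∃ P : Polynomial (Polynomial F),
      ((∀ k, (P.coeff k).natDegree ≤ t) ∧ P.natDegree ≤ t) ∧
      P.map (evalRingHom 0) = q ∧
      (∀ i ∈ Cs, P.eval (Polynomial.C (α i)) = u i) ∧
      (∀ i ∈ Cs, P.map (evalRingHom (α i)) = v i) := by
  classical
  set S : Finset (Option (Fin n)) := Finset.insertNone Cs with hS
  set b : Option (Fin n) → F := fun o => o.elim 0 α with hbdef
  set w : Option (Fin n) → F[X] := fun o => o.elim q v with hwdef
  have hb : Function.Injective b := by
    rintro (_ | i) (_ | j) h
    · rfl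
    · exact absurd h.symm (hα0 j)
    · exact absurd h (hα0 i)
    · exact congrArg some (hα h)
  have hw : ∀ o ∈ S, (w o).natDegree ≤ t := by
    rintro (_ | i) h
    · exact hq
    · exact hv i (by simpa [hS] using h)
  have hwu : ∀ o ∈ S, ∀ j ∈ Cs, (w o).eval (α j) = (u j).eval (b o) := by
    rintro (_ | i) h j hj
    · exact hqv j hj
    · exact (hcons j hj i (by simpa [hS] using h)).symm
  have hScard : S.card ≤ t + 1 := by
    rw [hS, Finset.card_insertNone]; omega
  set L := Lagrange.basis S b with hL
  set M := Lagrange.basis Cs α with hM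
  have hLd : ∀ o ∈ S, (L o).natDegree ≤ t := fun o ho =>
    basis_deg S b hb.injOn o ho t hScard
  have hMd : ∀ i ∈ Cs, (M i).natDegree ≤ t := fun o ho =>
    basis_deg Cs α hα.injOn o ho t (by omega)
  set D : Fin n → F[X] := fun j => u j - ∑ o ∈ S, L o * Polynomial.C ((w o).eval (α j)) with hD
  have hDd : ∀ j ∈ Cs, (D j).natDegree ≤ t := fun j hj =>
    (natDegree_sub_le_of_le (hu j hj) (natDegree_sum_le_of_forall_le _ _ fun o ho =>
      (natDegree_mul_C_le _ _).trans (hLd o ho))).trans (max_self t).le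
  have hD0 : ∀ j ∈ Cs, ∀ o ∈ S, (D j).eval (b o) = 0 := by
    intro j hj o ho
    have h1 := congrArg (eval 0) (basis_sum S b hb.injOn o ho
      (fun o => Polynomial.C ((w o).eval (α j))))
    simp only [eval_finset_sum, eval_mul, eval_C] at h1
    simp only [hD, eval_sub, eval_finset_sum, eval_mul, eval_C]
    rw [h1, hwu o ho j hj, sub_self]
  have hcol : ∀ o ∈ S, (∑ o ∈ S, tens (L o) (w o) + ∑ j ∈ Cs, tens (D j) (M j)).map
      (evalRingHom (b o)) = w o := by
    intro o ho
    rw [Polynomial.map_add, Polynomial.map_sum, Polynomial.map_sum]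
    simp only [tens_map]
    rw [basis_sum S b hb.injOn o ho, Finset.sum_eq_zero, add_zero]
    intro j hj
    rw [hD0 j hj o ho]; simp
  refine ⟨∑ o ∈ S, tens (L o) (w o) + ∑ j ∈ Cs, tens (D j) (M j), ⟨?_, ?_⟩, ?_, ?_, ?_⟩
  · intro k
    rw [coeff_add, finset_sum_coeff, finset_sum_coeff]
    exact natDegree_add_le_of_degree_le
      (natDegree_sum_le_of_forall_le _ _ fun o ho => tens_coeff _ _ _ _ (hLd o ho))
      (natDegree_sum_le_of_forall_le _ _ fun o ho => tens_coeff _ _ _ _ (hDd o ho))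
  · exact natDegree_add_le_of_degree_le
      (natDegree_sum_le_of_forall_le _ _ fun o ho => tens_deg _ _ _ (hw o ho))
      (natDegree_sum_le_of_forall_le _ _ fun o ho => tens_deg _ _ _ (hMd o ho))
  · exact hcol none (by simp [hS])
  · intro i hi
    rw [eval_add, eval_finset_sum, eval_finset_sum]
    simp only [tens_eval]
    have h2 := basis_sum Cs α hα.injOn i hi D
    simp only [mul_comm (Polynomial.C _) (D _)] at h2
    rw [h2]
    simp [hD]
  · intro i hi
    exact hcol (some i) (by simpa [hS] using hi)
end

section
/- Let F be a field, d and r natural numbers, α_1,…,α_N distinct elements of F with N ≥ d + 2r + 1, and w_1,…,w_N ∈ F. If q_1 and q_2 are polynomials over F of degree at most d such that the number of indices i with q_1(α_i) ≠ w_i is at most r and the number of indices i with q_2(α_i) ≠ w_i is at most r, then q_1 = q_2. (This is the uniqueness guarantee underlying Reed–Solomon error correction of up to r incorrect shares from N ≥ d + 2r + 1 shares of a degree-d polynomial.) -/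
open Polynomial

/-- Uniqueness underlying Reed–Solomon error correction: if `N ≥ d + 2r + 1` and two
degree-`≤ d` polynomials each disagree with the received word `w` in at most `r`
positions, then they are equal. -/
theorem stmt_6 (F : Type*) [Field F] (d r N : ℕ) (hN : d + 2 * r + 1 ≤ N)
    (α : Fin N → F) (hα : Function.Injective α) (w : Fin N → F)
    (q₁ q₂ : F[X]) (hq₁ : q₁.natDegree ≤ d) (hq₂ : q₂.natDegree ≤ d)
    (he₁ : {i : Fin N | q₁.eval (α i) ≠ w i}.ncard ≤ r)
    (he₂ : {i : Fin N | q₂.eval (α i) ≠ w i}.ncard ≤ r) :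
    q₁ = q₂ := by
  classical
  set A : Set (Fin N) := {i | q₁.eval (α i) ≠ w i} with hA
  set B : Set (Fin N) := {i | q₂.eval (α i) ≠ w i} with hB
  have hU : (A ∪ B).ncard ≤ 2 * r := by
    have := Set.ncard_union_le A B
    omega
  have hC : (A ∪ B).ncard + ((A ∪ B)ᶜ).ncard = N := by
    simpa using Set.ncard_add_ncard_compl (A ∪ B)
  have hcard : d < ((A ∪ B)ᶜ).toFinset.card := by
    rw [← Set.ncard_eq_toFinset_card']
    omega
  have hdeg : ∀ q : F[X], q.natDegree ≤ d → q.degree < ((A ∪ B)ᶜ).toFinset.card := by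
    intro q hq
    refine lt_of_le_of_lt (Polynomial.degree_le_of_natDegree_le hq) ?_
    exact_mod_cast hcard
  refine Polynomial.eq_of_degrees_lt_of_eval_index_eq ((A ∪ B)ᶜ).toFinset
    (hα.injOn) (hdeg q₁ hq₁) (hdeg q₂ hq₂) ?_
  intro i hi
  have hi' : i ∉ A ∪ B := by simpa using hi
  have h1 : q₁.eval (α i) = w i := by
    by_contra h
    exact hi' (Or.inl h)
  have h2 : q₂.eval (α i) = w i := by
    by_contra h
    exact hi' (Or.inr h)
  rw [h1, h2]
end

section
/- Let F be a field, d and r natural numbers, and α_1,…,α_N distinct elements of F with 1 ≤ N ≤ d + 2r. Then there exist values w_1,…,w_N ∈ F and two distinct polynomials q_1 ≠ q_2 over F, each of degree at most d, such that the number of indices i with q_1(α_i) ≠ w_i is at most r and the number of indices i with q_2(α_i) ≠ w_i is at most r. (Hence unique decoding of a degree-d polynomial from N shares with up to r errors is impossible when N ≤ d + 2r; together with the matching uniqueness result this shows error correction is possible if and only if N ≥ d + 2r + 1.) -/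
open Polynomial

lemma ncard_le_of_Ico {N a r : ℕ} (S : Set (Fin N)) (h : ∀ i ∈ S, a ≤ i.val ∧ i.val < a + r) :
    S.ncard ≤ r := by
  have h1 : S.ncard ≤ (Finset.Ico a (a + r) : Set ℕ).ncard := by
    refine Set.ncard_le_ncard_of_injOn (fun i : Fin N => i.val) ?_ ?_ (Finset.finite_toSet _)
    · intro i hi
      simpa using h i hi
    · intro i _ j _ hij
      exact Fin.ext hij
  rw [Set.ncard_coe_finset] at h1
  simpa using h1

/-- Impossibility of unique decoding with `N ≤ d + 2r` shares: there exist a received word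
`w` and two distinct degree-`≤ d` polynomials each disagreeing with `w` in at most `r`
positions. -/
theorem stmt_7 (F : Type*) [Field F] (d r N : ℕ) (hN1 : 1 ≤ N) (hN : N ≤ d + 2 * r)
    (α : Fin N → F) (hα : Function.Injective α) :
    ∃ (w : Fin N → F) (q₁ q₂ : F[X]),
      q₁ ≠ q₂ ∧ q₁.natDegree ≤ d ∧ q₂.natDegree ≤ d ∧
      {i : Fin N | q₁.eval (α i) ≠ w i}.ncard ≤ r ∧
      {i : Fin N | q₂.eval (α i) ≠ w i}.ncard ≤ r := by
  let s : Finset (Fin N) := Finset.univ.filter (fun i => i.val < d)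
  let q : F[X] := ∏ i ∈ s, (X - C (α i))
  have hs : s.card ≤ d := by
    rw [← Set.ncard_coe_finset]
    apply ncard_le_of_Ico (a := 0)
    intro i hi
    simpa [s] using hi
  have hq : q.Monic := monic_prod_of_monic _ _ fun i _ => monic_X_sub_C _
  have hz : ∀ i : Fin N, i.val < d → q.eval (α i) = 0 := by
    intro i hi
    simp only [q, eval_prod]
    exact Finset.prod_eq_zero (i := i) (by simpa [s] using hi) (by simp)
  refine ⟨fun i => if i.val < d + r then 0 else q.eval (α i), 0, q, hq.ne_zero.symm, by simp,
    ?_, ?_, ?_⟩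
  · have : q.natDegree = s.card := natDegree_finsetProd_X_sub_C_eq_card s α
    omega
  · apply ncard_le_of_Ico (a := d + r)
    intro i hi
    have := i.isLt
    by_cases h : i.val < d + r
    · simp at hi
      omega
    · omega
  · apply ncard_le_of_Ico (a := d)
    intro i hi
    by_cases h : i.val < d + r
    · refine ⟨?_, h⟩
      by_contra h2
      simp [h, hz i (by omega)] at hi
    · simp [h] at hi
end

section
/- Let F be a field, α_1,…,α_n distinct nonzero elements of F, t a natural number, and C ⊆ {1,…,n} with |C| ≤ t. Let (f_i)_{i∈C} be polynomials over F of degree at most t with f_i(α_j) = f_j(α_i) for all i, j ∈ C, and let q be a polynomial over F of degree at most t with q(α_i) = f_i(0) for all i ∈ C. Then there exists a symmetric bivariate polynomial F(x,y) over F of degree at most (t,t) (so that F(x,y) = F(y,x)) such that F(0,y) = q(y) and F(x,α_i) = f_i(x) for all i ∈ C. (This is the extension claim underlying the privacy of VSS schemes that embed the Shamir-sharing polynomial q at x = 0 in a random symmetric degree-(t,t) bivariate polynomial and give each party only its row polynomial.) -/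
open Polynomial

/-- Interpolation of consistent rows by a symmetric bivariate polynomial. -/
theorem symm_interp {F : Type*} [Field F] {ι : Type*} [DecidableEq ι] (t : ℕ)
    (β : ι → F) (hβ : Function.Injective β) (g : ι → F[X]) (S : Finset ι) :
    S.card ≤ t + 1 → (∀ i ∈ S, (g i).natDegree ≤ t) →
    (∀ i ∈ S, ∀ j ∈ S, (g i).eval (β j) = (g j).eval (β i)) →
    ∃ P : Polynomial (Polynomial F),
      (∀ k, (P.coeff k).natDegree ≤ t) ∧ P.natDegree ≤ t ∧
      (∀ a b, (P.coeff a).coeff b = (P.coeff b).coeff a) ∧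
      (∀ a b, (P.eval (C a)).eval b = (P.eval (C b)).eval a) ∧
      (∀ a, (P.eval (C a)).natDegree ≤ t) ∧
      (∀ i ∈ S, P.eval (C (β i)) = g i) := by
  induction S using Finset.induction_on with
  | empty => exact fun _ _ _ => ⟨0, by simp⟩
  | insert i S hi ih =>
    intro hc hd hs
    rw [Finset.card_insert_of_notMem hi] at hc
    obtain ⟨P, h1, h2, h3, h4, h5, h6⟩ := ih (by omega)
      (fun j hj => hd j (Finset.mem_insert_of_mem hj))
      (fun j hj k hk => hs j (Finset.mem_insert_of_mem hj) k (Finset.mem_insert_of_mem hk))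
    obtain ⟨h, hh⟩ : ∃ h, h = g i - P.eval (C (β i)) := ⟨_, rfl⟩
    obtain ⟨N, hN⟩ : ∃ N : F[X], N = ∏ j ∈ S, (X - C (β j)) := ⟨_, rfl⟩
    have hhd : h.natDegree ≤ t := by
      rw [hh]
      exact (natDegree_sub_le_of_le (hd i (Finset.mem_insert_self _ _)) (h5 _)).trans (by simp)
    have hNd : N.natDegree ≤ t := by
      rw [hN, natDegree_prod_of_monic _ _ (fun j _ => monic_X_sub_C _)]
      simp only [natDegree_X_sub_C, Finset.sum_const, smul_eq_mul, mul_one]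
      omega
    have hNi : N.eval (β i) ≠ 0 := by
      rw [hN, eval_prod, Finset.prod_ne_zero_iff]
      intro j hj
      simp only [eval_sub, eval_X, eval_C]
      exact sub_ne_zero.mpr (fun e => hi (hβ e ▸ hj))
    have hN0 : ∀ j ∈ S, N.eval (β j) = 0 := by
      intro j hj
      rw [hN, eval_prod]
      exact Finset.prod_eq_zero hj (by simp)
    have hh0 : ∀ j ∈ S, h.eval (β j) = 0 := by
      intro j hj
      rw [hh, eval_sub, h4, h6 j hj,
        hs i (Finset.mem_insert_self _ _) j (Finset.mem_insert_of_mem hj), sub_self]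
    obtain ⟨c, hcN⟩ : ∃ c, c * N.eval (β i) = 1 := ⟨_, inv_mul_cancel₀ hNi⟩
    obtain ⟨d, hdd⟩ : ∃ d, d = c * c * h.eval (β i) := ⟨_, rfl⟩
    obtain ⟨Q, hQ⟩ : ∃ Q : Polynomial (Polynomial F), Q = P + (C (C c * h) * N.map C
      + C (C c * N) * h.map C - C (C d * N) * N.map C) := ⟨_, rfl⟩
    have hQc : ∀ k, Q.coeff k = P.coeff k + (C c * h * C (N.coeff k)
        + C c * N * C (h.coeff k) - C d * N * C (N.coeff k)) := by
      intro k
      simp only [hQ, coeff_add, coeff_sub, coeff_C_mul, coeff_map]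
    have hQe : ∀ a, Q.eval (C a) = P.eval (C a) + (C c * h * C (N.eval a)
        + C c * N * C (h.eval a) - C d * N * C (N.eval a)) := by
      intro a
      simp only [hQ, eval_add, eval_sub, eval_mul, eval_C, eval_map, eval₂_at_apply]
    have key : ∀ (p : F[X]) (u v : F), p.natDegree ≤ t → (C u * p * C v).natDegree ≤ t :=
      fun p u v hp => (natDegree_mul_C_le _ _).trans ((natDegree_C_mul_le _ _).trans hp)
    have key2 : ∀ (p : F[X]) (u v w : F), p.natDegree ≤ t →
        (p + (C c * h * C u + C c * N * C v - C d * N * C w)).natDegree ≤ t := by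
      intro p u v w hp
      exact natDegree_add_le_of_degree_le hp ((natDegree_sub_le_of_le
        (natDegree_add_le_of_degree_le (key _ _ _ hhd) (key _ _ _ hNd))
        (key _ _ _ hNd)).trans (by simp))
    refine ⟨Q, ?_, ?_, ?_, ?_, ?_, ?_⟩
    · intro k
      rw [hQc]
      exact key2 _ _ _ _ (h1 k)
    · rw [natDegree_le_iff_coeff_eq_zero]
      intro k hk
      rw [hQc, coeff_eq_zero_of_natDegree_lt (h2.trans_lt hk),
        coeff_eq_zero_of_natDegree_lt (hNd.trans_lt hk),
        coeff_eq_zero_of_natDegree_lt (hhd.trans_lt hk)]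
      simp
    · intro a b
      simp only [hQc, coeff_add, coeff_sub, coeff_mul_C, coeff_C_mul]
      rw [h3 a b]
      ring
    · intro a b
      simp only [hQe, eval_add, eval_sub, eval_mul, eval_C]
      rw [h4 a b]
      ring
    · intro a
      rw [hQe]
      exact key2 _ _ _ _ (h5 a)
    · intro j hj
      rw [hQe]
      rcases Finset.mem_insert.mp hj with rfl | hj
      · have e : (C c : F[X]) * C (N.eval (β j)) = 1 := by rw [← C_mul, hcN, C_1]
        have e2 : g j = h + P.eval (C (β j)) := by rw [hh]; ring
        rw [e2, hdd]
        simp only [C_mul]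
        linear_combination (h - C c * N * C (h.eval (β j))) * e
      · rw [h6 j hj, hN0 j hj, hh0 j hj]
        simp

/-- Extension lemma for symmetric bivariate sharing: given at most `t` pairwise-consistent
row polynomials `f i` (degree ≤ t) and any degree-`≤ t` polynomial `q` with
`q (α i) = f i (0)`, there is a symmetric bivariate polynomial of degree at most `(t,t)`
with `F(0,y) = q(y)` and rows `f i`.
A bivariate polynomial `F(x,y)` is represented as `P : Polynomial (Polynomial F)`
(polynomial in `y` with coefficients polynomials in `x`): `F(x, α) = P.eval (C α)`,
`F(0, y) = P.map (evalRingHom 0)`, and symmetry means the coefficient of `x^a y^b` equals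
that of `x^b y^a` for all `a, b`. -/
theorem stmt_10 (F : Type*) [Field F] (n t : ℕ)
    (α : Fin n → F) (hα : Function.Injective α) (hα0 : ∀ i, α i ≠ 0)
    (Cs : Finset (Fin n)) (hCs : Cs.card ≤ t)
    (f : Fin n → F[X]) (hf : ∀ i ∈ Cs, (f i).natDegree ≤ t)
    (hcons : ∀ i ∈ Cs, ∀ j ∈ Cs, (f i).eval (α j) = (f j).eval (α i))
    (q : F[X]) (hq : q.natDegree ≤ t) (hqv : ∀ i ∈ Cs, q.eval (α i) = (f i).eval 0) :
    ∃ P : Polynomial (Polynomial F),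
      (∀ k, (P.coeff k).natDegree ≤ t) ∧ P.natDegree ≤ t ∧
      (∀ a b, (P.coeff a).coeff b = (P.coeff b).coeff a) ∧
      P.map (evalRingHom 0) = q ∧
      (∀ i ∈ Cs, P.eval (Polynomial.C (α i)) = f i) := by
  obtain ⟨P, h1, h2, h3, -, -, h6⟩ := symm_interp t (fun o : Option (Fin n) => o.elim 0 α)
    (by
      rintro (_ | i) (_ | j) h
      · rfl
      · exact absurd h.symm (hα0 j)
      · exact absurd h (hα0 i)
      · exact congrArg some (hα h))
    (fun o => o.elim q f) (Finset.insertNone Cs)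
    (by rw [Finset.card_insertNone]; omega)
    (by
      rintro (_ | i) hi
      · exact hq
      · exact hf i (Finset.some_mem_insertNone.mp hi))
    (by
      rintro (_ | i) hi (_ | j) hj
      · rfl
      · exact hqv j (Finset.some_mem_insertNone.mp hj)
      · exact (hqv i (Finset.some_mem_insertNone.mp hi)).symm
      · exact hcons i (Finset.some_mem_insertNone.mp hi) j (Finset.some_mem_insertNone.mp hj))
  refine ⟨P, h1, h2, h3, ?_, fun i hi => h6 (some i) (Finset.some_mem_insertNone.mpr hi)⟩
  have h0 : P.coeff 0 = q := by
    have := h6 none (Finset.none_mem_insertNone)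
    simpa [coeff_zero_eq_eval_zero] using this
  ext k
  rw [coeff_map, coe_evalRingHom, ← coeff_zero_eq_eval_zero, h3, h0]
end

section
/- Let F be a field, t a natural number, d ≥ t, and L a natural number with L ≤ d + 1 − t. Let α_1,…,α_n be distinct nonzero elements of F and β_1,…,β_L distinct elements of F with β_k ≠ α_i for all k and i. Let C ⊆ {1,…,n} with |C| ≤ t. Let (f_i)_{i∈C} be polynomials over F of degree at most d and (g_i)_{i∈C} polynomials over F of degree at most t satisfying f_i(α_j) = g_j(α_i) for all i, j ∈ C. Then for all polynomials q_1,…,q_L over F of degree at most t satisfying q_k(α_i) = f_i(β_k) for all i ∈ C and all 1 ≤ k ≤ L, there exists a bivariate polynomial F(x,y) over F of degree at most (d,t) such that F(x,α_i) = f_i(x) and F(α_i,y) = g_i(y) for all i ∈ C, and F(β_k,y) = q_k(y) for all 1 ≤ k ≤ L. (This is the degrees-of-freedom claim underlying the batched AVSS of Choudhury–Hirt–Patra: a degree-(d,t) bivariate polynomial with d = n − 2t − 1 can hide L = n − 3t independent degree-t Shamir-sharing polynomials at the evaluation points β_1,…,β_L from an adversary learning at most t row and column polynomials.) -/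
open Polynomial

theorem aux_exists {F : Type*} [Field F] {ι κ : Type*} [DecidableEq ι] [DecidableEq κ]
    (t d : ℕ) (S : Finset ι) (v : ι → F) (hv : Set.InjOn v S) (hS : S.card ≤ d + 1)
    (T : Finset κ) (a : κ → F) (ha : Set.InjOn a T) (hT : T.card ≤ t)
    (h : ι → F[X]) (f : κ → F[X])
    (hh : ∀ s ∈ S, (h s).natDegree ≤ t) (hf : ∀ i ∈ T, (f i).natDegree ≤ d)
    (hc : ∀ s ∈ S, ∀ i ∈ T, (h s).eval (a i) = (f i).eval (v s)) :
    ∃ P : Polynomial (Polynomial F),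
      (∀ k, (P.coeff k).natDegree ≤ d) ∧ P.natDegree ≤ t ∧
      (∀ i ∈ T, P.eval (Polynomial.C (a i)) = f i) ∧
      (∀ s ∈ S, P.map (evalRingHom (v s)) = h s) := by
  have hl : ∀ s ∈ S, (Lagrange.basis S v s).natDegree ≤ d := by
    intro s hs
    rw [Lagrange.natDegree_basis hv hs]; omega
  have hm : ∀ i ∈ T, (Lagrange.basis T a i).natDegree ≤ t := by
    intro s hs
    rw [Lagrange.natDegree_basis ha hs]; omega
  let I : κ → F[X] := fun i => ∑ s ∈ S, Lagrange.basis S v s * C ((f i).eval (v s))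
  have hI : ∀ i, (I i).natDegree ≤ d := fun i =>
    natDegree_sum_le_of_forall_le _ _ fun s hs => (natDegree_mul_C_le _ _).trans (hl s hs)
  have hIe : ∀ i, ∀ s ∈ S, (I i).eval (v s) = (f i).eval (v s) := by
    intro i s hs
    simp only [I, eval_finsetSum, eval_mul, eval_C]
    rw [Finset.sum_eq_single_of_mem s hs, Lagrange.eval_basis_self hv hs, one_mul]
    intro b _ hb
    rw [Lagrange.eval_basis_of_ne hb hs, zero_mul]
  refine ⟨∑ s ∈ S, C (Lagrange.basis S v s) * (h s).map C +
    ∑ i ∈ T, C (f i - I i) * (Lagrange.basis T a i).map C, ?_, ?_, ?_, ?_⟩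
  · intro k
    simp only [coeff_add, finsetSum_coeff, coeff_C_mul, coeff_map]
    refine natDegree_add_le_of_degree_le ?_ ?_
    · exact natDegree_sum_le_of_forall_le _ _ fun s hs =>
        (natDegree_mul_C_le _ _).trans (hl s hs)
    · exact natDegree_sum_le_of_forall_le _ _ fun i hi =>
        (natDegree_mul_C_le _ _).trans (natDegree_sub_le_of_le (hf i hi) (hI i) |>.trans (by simp))
  · refine natDegree_add_le_of_degree_le ?_ ?_
    · exact natDegree_sum_le_of_forall_le _ _ fun s hs =>
        (natDegree_C_mul_le _ _).trans (natDegree_map_le.trans (hh s hs))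
    · exact natDegree_sum_le_of_forall_le _ _ fun i hi =>
        (natDegree_C_mul_le _ _).trans (natDegree_map_le.trans (hm i hi))
  · intro i hi
    have e : ∀ p : F[X], (p.map C).eval (C (a i)) = C (p.eval (a i)) := fun p => by
      rw [eval_map, eval₂_at_apply]
    simp only [eval_add, eval_finsetSum, eval_mul, eval_C, e]
    rw [Finset.sum_eq_single_of_mem (s := T) i hi, Lagrange.eval_basis_self ha hi]
    · have : ∑ s ∈ S, Lagrange.basis S v s * C ((h s).eval (a i)) = I i :=
        Finset.sum_congr rfl fun s hs => by rw [hc s hs i hi]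
      rw [this]; simp
    · intro b _ hb
      rw [Lagrange.eval_basis_of_ne hb hi]; simp
  · intro s hs
    have e : ∀ p : F[X], (p.map C).map (evalRingHom (v s)) = p := fun p => by
      ext k
      simp [coeff_map]
    simp only [Polynomial.map_add, Polynomial.map_sum, Polynomial.map_mul, e, map_C,
      coe_evalRingHom]
    rw [Finset.sum_eq_single_of_mem (s := S) s hs, Lagrange.eval_basis_self hv hs]
    · simp [hIe _ s hs]
    · intro b _ hb
      rw [Lagrange.eval_basis_of_ne hb hs]; simp

/-- Degrees-of-freedom claim behind the batched CHP AVSS: given at most `t` consistent row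
polynomials `f i` (degree ≤ d) and column polynomials `g i` (degree ≤ t), and any
`L ≤ d + 1 - t` degree-`≤ t` polynomials `q k` with `q k (α i) = f i (β k)`, there is a
bivariate polynomial of degree at most `(d,t)` with the given rows and columns and with
`F(β k, y) = q k (y)` for all `k`.
A bivariate polynomial `F(x,y)` is represented as `P : Polynomial (Polynomial F)`
(polynomial in `y` with coefficients polynomials in `x`): `F(x, α) = P.eval (C α)` and
`F(β, y) = P.map (evalRingHom β)`. -/
theorem stmt_11 (F : Type*) [Field F] (n t d L : ℕ) (htd : t ≤ d) (hL : L ≤ d + 1 - t)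
    (α : Fin n → F) (hα : Function.Injective α) (hα0 : ∀ i, α i ≠ 0)
    (β : Fin L → F) (hβ : Function.Injective β) (hβα : ∀ k i, β k ≠ α i)
    (Cs : Finset (Fin n)) (hCs : Cs.card ≤ t)
    (f g : Fin n → F[X])
    (hf : ∀ i ∈ Cs, (f i).natDegree ≤ d) (hg : ∀ i ∈ Cs, (g i).natDegree ≤ t)
    (hcons : ∀ i ∈ Cs, ∀ j ∈ Cs, (f i).eval (α j) = (g j).eval (α i))
    (q : Fin L → F[X]) (hq : ∀ k, (q k).natDegree ≤ t)
    (hqv : ∀ k, ∀ i ∈ Cs, (q k).eval (α i) = (f i).eval (β k)) :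
    ∃ P : Polynomial (Polynomial F),
      (∀ k, (P.coeff k).natDegree ≤ d) ∧ P.natDegree ≤ t ∧
      (∀ i ∈ Cs, P.eval (Polynomial.C (α i)) = f i) ∧
      (∀ i ∈ Cs, P.map (evalRingHom (α i)) = g i) ∧
      (∀ k, P.map (evalRingHom (β k)) = q k) := by
  classical
  obtain ⟨P, h1, h2, h3, h4⟩ := aux_exists t d (Cs.disjSum (Finset.univ : Finset (Fin L)))
    (Sum.elim α β)
    (Function.Injective.injOn (hα.sumElim hβ fun i k => (hβα k i).symm))
    (by rw [Finset.card_disjSum, Finset.card_fin]; omega)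
    Cs α hα.injOn hCs (Sum.elim g q) f
    (by
      rintro (i | k) hs
      · exact hg i (Finset.inl_mem_disjSum.1 hs)
      · exact hq k)
    hf
    (by
      rintro (j | k) hs i hi
      · exact (hcons i hi j (Finset.inl_mem_disjSum.1 hs)).symm
      · exact hqv k i hi)
  exact ⟨P, h1, h2, h3, fun i hi => h4 (Sum.inl i) (Finset.inl_mem_disjSum.2 hi),
    fun k => h4 (Sum.inr k) (Finset.inr_mem_disjSum.2 (Finset.mem_univ k))⟩
end
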